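/- Let S be a nearly simple monoid, i.e., S has a unique minimal two-sided ideal K and every non-invertible element of S lies in K. If K contains an idempotent which is minimal among the idempotents of S, then S is completely regular: every element a ∈ S has some x ∈ S with a x a = a and a x = x a. -/

import Mathlib

/-- A two-sided ideal of a monoid `S` (as a subset). -/
def IsTwoSidedIdealSet {S : Type*} [Monoid S] (I : Set S) : Prop :=
  I.Nonempty ∧ ∀ s : S, ∀ a ∈ I, s * a ∈ I ∧ a * s ∈ I

/-!
Let `p` be a minimal idempotent of the minimal ideal `K`. Minimality of `K` gives `K = S p S`, and
for every `c` in the corner `p S p` it gives `u c v = p` for some `u`, `v`, which may be taken in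
`p S p`. As `p` is the only idempotent of `p S p`, one-sided inverses there are two-sided, so
`p S p` is a group. An element `a = (u p) (p v)` of `K` is then controlled by the reversed product
`(p v) (u p) ∈ p S p`: if `g` is the inverse of the latter, `x = (u p) g² (p v)` is the commuting
inverse of `a`.
-/

/-- Complete regularity of a single element: it has a generalized inverse commuting with it. -/
def IsCompletelyRegularElem {S : Type*} [Mul S] (a : S) : Prop :=
  ∃ x : S, a * x * a = a ∧ a * x = x * a

/-- Minimality among all idempotents for the order `q ≤ p ↔ q = q * p ∧ q = p * q`. The order is
spelled out here instead of being installed as an instance on the subtype of idempotents. -/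
structure IsMinimalIdempotent {S : Type*} [Mul S] (p : S) : Prop where
  isIdempotentElem : IsIdempotentElem p
  eq_of_le : ∀ q : S, IsIdempotentElem q → q = q * p → q = p * q → q = p

namespace IsCompletelyRegularElem

theorem of_isUnit {M : Type*} [Monoid M] {a : M} (ha : IsUnit a) : IsCompletelyRegularElem a := by
  obtain ⟨b, hab, hba⟩ := isUnit_iff_exists.mp ha
  exact ⟨b, by rw [hab, one_mul], by rw [hab, hba]⟩

theorem mul_of_commute_mul {S : Type*} [Semigroup S] {s t g : S} (hg : Commute (t * s) g)
    (hs : s * (t * s * g) = s) : IsCompletelyRegularElem (s * t) := by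
  have mul_inverse : s * t * (s * g * g * t) = s * g * t :=
    calc s * t * (s * g * g * t) = s * (t * s * g) * g * t := by simp only [mul_assoc]
      _ = s * g * t := by rw [hs]
  have inverse_mul : s * g * g * t * (s * t) = s * g * t :=
    calc s * g * g * t * (s * t) = s * (g * (g * (t * s))) * t := by simp only [mul_assoc]
      _ = s * (t * s * g) * g * t := by rw [← hg.eq, ← mul_assoc g, ← hg.eq]; simp only [mul_assoc]
      _ = s * g * t := by rw [hs]
  -- Cline's formula for Drazin inverses: `(s * t)ᴰ = s * ((t * s)ᴰ) ^ 2 * t`.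
  refine ⟨s * g * g * t, ?_, mul_inverse.trans inverse_mul.symm⟩
  calc s * t * (s * g * g * t) * (s * t) = s * (g * (t * s)) * t := by
        rw [mul_inverse]; simp only [mul_assoc]
    _ = s * t := by rw [← hg.eq, hs]

end IsCompletelyRegularElem

namespace IsMinimalIdempotent

open Subsemigroup

variable {S : Type*} [Semigroup S] {p : S}

theorem eq_of_mem_corner (hp : IsMinimalIdempotent p) {q : S} (hq : IsIdempotentElem q)
    (hqp : q ∈ corner p) : q = p :=
  have ⟨hpq, hqp⟩ := (mem_corner_iff hp.isIdempotentElem).mp hqp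
  hp.eq_of_le q hq hqp.symm hpq.symm

theorem mul_eq_symm_of_mem_corner (hp : IsMinimalIdempotent p) {x y : S} (hx : x ∈ corner p)
    (hy : y ∈ corner p) (hxy : x * y = p) : y * x = p := by
  refine hp.eq_of_mem_corner ?_ (mul_mem hy hx)
  have hpx : p * x = x := ((mem_corner_iff hp.isIdempotentElem).mp hx).1
  calc y * x * (y * x) = y * (x * y * x) := by simp only [mul_assoc]
    _ = y * x := by rw [hxy, hpx]

theorem exists_inverse_mem_corner (hp : IsMinimalIdempotent p) {c u v : S} (hc : c ∈ corner p)
    (huv : u * c * v = p) : ∃ g ∈ corner p, c * g = p ∧ g * c = p := by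
  obtain ⟨hpc, hcp⟩ := (mem_corner_iff hp.isIdempotentElem).mp hc
  have hu : p * u * p ∈ corner p := ⟨u, rfl⟩
  have hv : p * v * p ∈ corner p := ⟨v, rfl⟩
  have huv' : p * u * p * c * (p * v * p) = p :=
    calc p * u * p * c * (p * v * p) = p * (u * (p * c * p) * v) * p := by simp only [mul_assoc]
      _ = p := by rw [hpc, hcp, huv, hp.isIdempotentElem.eq, hp.isIdempotentElem.eq]
  refine ⟨p * v * p * (p * u * p), mul_mem hv hu, ?_, ?_⟩
  · rw [← mul_assoc]
    exact hp.mul_eq_symm_of_mem_corner hu (mul_mem hc hv) (by rwa [← mul_assoc])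
  · rw [mul_assoc]
    exact hp.mul_eq_symm_of_mem_corner (mul_mem hu hc) hv huv'

end IsMinimalIdempotent

section Ideal

variable {S : Type*} [Monoid S] {K : Set S}

theorem isTwoSidedIdealSet_setOf_mul_mul (a : S) :
    IsTwoSidedIdealSet {x : S | ∃ u v : S, u * a * v = x} := by
  refine ⟨⟨a, 1, 1, by rw [one_mul, mul_one]⟩, ?_⟩
  rintro s _ ⟨u, v, rfl⟩
  exact ⟨⟨s * u, v, by simp only [mul_assoc]⟩, ⟨u, v * s, by simp only [mul_assoc]⟩⟩

theorem IsTwoSidedIdealSet.exists_mul_mul_eq_of_minimal (hK : Minimal IsTwoSidedIdealSet K)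
    {a b : S} (ha : a ∈ K) (hb : b ∈ K) : ∃ u v : S, u * a * v = b := by
  refine hK.le_of_le (isTwoSidedIdealSet_setOf_mul_mul a) ?_ hb
  rintro _ ⟨u, v, rfl⟩
  exact (hK.prop.2 v _ (hK.prop.2 u a ha).1).2

theorem IsMinimalIdempotent.isCompletelyRegularElem_of_mem_minimal {p : S}
    (hp : IsMinimalIdempotent p) (hK : Minimal IsTwoSidedIdealSet K) (hpK : p ∈ K)
    {a : S} (ha : a ∈ K) : IsCompletelyRegularElem a := by
  have hpp : p * p = p := hp.isIdempotentElem
  obtain ⟨u, v, rfl⟩ := IsTwoSidedIdealSet.exists_mul_mul_eq_of_minimal hK hpK ha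
  have hfactor : u * p * (p * v) = u * p * v := by rw [← mul_assoc, mul_assoc u, hpp]
  have hcorner : p * v * (u * p) ∈ Subsemigroup.corner p := ⟨v * u, by simp only [mul_assoc]⟩
  have hcornerK : p * v * (u * p) ∈ K := by
    rw [mul_assoc]
    exact (hK.prop.2 _ p hpK).2
  obtain ⟨y, z, hyz⟩ := IsTwoSidedIdealSet.exists_mul_mul_eq_of_minimal hK hcornerK hpK
  obtain ⟨g, -, hcg, hgc⟩ := hp.exists_inverse_mem_corner hcorner hyz
  rw [← hfactor]
  exact .mul_of_commute_mul (hcg.trans hgc.symm) (by rw [hcg, mul_assoc, hpp])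

end Ideal

/-- A nearly simple monoid (unique minimal two-sided ideal `K` containing all
non-invertible elements) whose kernel `K` contains an idempotent that is minimal among the
idempotents of `S` is completely regular. -/
theorem stmt_2 {S : Type*} [Monoid S] (K : Set S)
    (hK : IsTwoSidedIdealSet K)
    (hKmin : ∀ I : Set S, IsTwoSidedIdealSet I → I ⊆ K → I = K)
    (hKuniq : ∀ I : Set S, IsTwoSidedIdealSet I →
      (∀ J : Set S, IsTwoSidedIdealSet J → J ⊆ I → J = I) → I = K)
    (hnoninv : ∀ a : S, ¬(∃ b : S, a * b = 1 ∧ b * a = 1) → a ∈ K)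
    (hidem : ∃ p ∈ K, p * p = p ∧
      ∀ q : S, q * q = q → q = q * p → q = p * q → q = p) :
    ∀ a : S, ∃ x : S, a * x * a = a ∧ a * x = x * a := by
  obtain ⟨p, hpK, hp, hpmin⟩ := hidem
  have hKminimal : Minimal IsTwoSidedIdealSet K := ⟨hK, fun I hI hIK => (hKmin I hI hIK).ge⟩
  have hpminimal : IsMinimalIdempotent p := ⟨hp, hpmin⟩
  intro a
  by_cases ha : IsUnit a
  · exact IsCompletelyRegularElem.of_isUnit ha
  · have haK : a ∈ K := hnoninv a (mt isUnit_iff_exists.mpr ha)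
    exact hpminimal.isCompletelyRegularElem_of_mem_minimal hKminimal hpK haK
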